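/- Let (S, turn, T, E, s₀) be a turn-based game in which S is a finite type and T is total. Let f₂ be a player-2 strategy such that every play from s₀ consistent with f₂ contains a state of E (i.e., f₂ is winning for player 2, witnessing a counterexample to the safety objective). Then there exists N : ℕ such that every play from s₀ consistent with f₂ contains a state of E among its first N states; equivalently, the set of finite histories from s₀ consistent with f₂ that contain no state of E is finite. -/

import Mathlib

/-!
This is Kőnig's lemma. The safe consistent histories form a set closed under nonempty
prefixes, and over a finite state space each history has only finitely many one-step
extensions. If the set were infinite, then `[s0]` would have infinitely many safe
extensions, and whenever a history has infinitely many of them so does one of its one-step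
extensions (`exists_infinite_extension`). Iterating gives an infinite sequence all of whose
prefixes are safe consistent histories, i.e. a consistent play avoiding `E`, which
contradicts that `f2` is winning. The uniform bound is then one more than the maximal length
of a safe history, since the prefixes of a consistent play up to its first visit to `E` are
safe histories.
-/

/-- A play of a turn-based game from `s0`: starts at `s0` and follows the transition
relation `T`. -/
def IsPlay {S : Type*} (T : S → S → Prop) (s0 : S) (ρ : ℕ → S) : Prop :=
  ρ 0 = s0 ∧ ∀ n : ℕ, T (ρ n) (ρ (n + 1))

/-- The finite history `ρ(0) ⋯ ρ(n)` of a play. -/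
def histPrefix {S : Type*} (ρ : ℕ → S) (n : ℕ) : List S :=
  List.ofFn (fun i : Fin (n + 1) => ρ i)

/-- A player-2 strategy: to every nonempty finite history ending in a state `v` where
player 2 moves (`turn v = false`) it assigns a `T`-successor of `v`. -/
def IsStrategy2 {S : Type*} (turn : S → Bool) (T : S → S → Prop) (f : List S → S) : Prop :=
  ∀ (h : List S) (v : S), h.getLast? = some v → turn v = false → T v (f h)

/-- A play is consistent with the player-2 strategy `f`. -/
def Consistent2 {S : Type*} (turn : S → Bool) (f : List S → S) (ρ : ℕ → S) : Prop :=
  ∀ n : ℕ, turn (ρ n) = false → ρ (n + 1) = f (histPrefix ρ n)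

/-- A finite history from `s0` consistent with the player-2 strategy `f2`: a nonempty list
starting at `s0`, following `T`, and following `f2` at player-2 positions. -/
def IsConsistentHist {S : Type*} (turn : S → Bool) (T : S → S → Prop) (f2 : List S → S)
    (s0 : S) (l : List S) : Prop :=
  l ≠ [] ∧ l.head? = some s0 ∧
  (∀ (i : ℕ) (hi : i + 1 < l.length),
    T (l.get ⟨i, Nat.lt_of_succ_lt hi⟩) (l.get ⟨i + 1, hi⟩)) ∧
  (∀ (i : ℕ) (hi : i + 1 < l.length),
    turn (l.get ⟨i, Nat.lt_of_succ_lt hi⟩) = false →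
      l.get ⟨i + 1, hi⟩ = f2 (l.take (i + 1)))

/-- The vertices of the counterexample tree: consistent histories without unsafe state. -/
def safeHist {S : Type*} (turn : S → Bool) (T : S → S → Prop) (f2 : List S → S)
    (s0 : S) (E : Set S) : Set (List S) :=
  {l | IsConsistentHist turn T f2 s0 l ∧ ∀ s ∈ l, s ∉ E}

theorem histPrefix_succ {S : Type*} (ρ : ℕ → S) (n : ℕ) :
    histPrefix ρ (n + 1) = histPrefix ρ n ++ [ρ (n + 1)] := by
  simp only [histPrefix]
  rw [List.ofFn_succ']
  simp [List.concat_eq_append]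

theorem length_histPrefix {S : Type*} (ρ : ℕ → S) (n : ℕ) :
    (histPrefix ρ n).length = n + 1 := by
  simp only [histPrefix, List.length_ofFn]

theorem getElem_histPrefix {S : Type*} (ρ : ℕ → S) (n i : ℕ)
    (hi : i < (histPrefix ρ n).length) : (histPrefix ρ n)[i] = ρ i := by
  simp only [histPrefix, List.getElem_ofFn]

theorem take_histPrefix {S : Type*} (ρ : ℕ → S) {i n : ℕ} (h : i ≤ n) :
    (histPrefix ρ n).take (i + 1) = histPrefix ρ i := by
  apply List.ext_getElem
  · simp [length_histPrefix, h]
  · intro k _ _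
    simp [getElem_histPrefix]

/-- Prefixes of a consistent play that have not yet met `E` are safe histories. -/
theorem histPrefix_mem_safeHist {S : Type*} {turn : S → Bool} {T : S → S → Prop}
    {f2 : List S → S} {s0 : S} {E : Set S} {ρ : ℕ → S} (hp : IsPlay T s0 ρ)
    (hc : Consistent2 turn f2 ρ) {n : ℕ} (hE : ∀ k ≤ n, ρ k ∉ E) :
    histPrefix ρ n ∈ safeHist turn T f2 s0 E := by
  refine ⟨⟨?_, ?_, ?_, ?_⟩, ?_⟩
  · simp [histPrefix]
  · simp [histPrefix, List.ofFn_succ, hp.1]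
  · intro i hi
    simpa [getElem_histPrefix] using hp.2 i
  · intro i hi ht
    rw [length_histPrefix] at hi
    rw [take_histPrefix ρ (by omega), ← hc i (by simpa [getElem_histPrefix] using ht)]
    simp [getElem_histPrefix]
  · intro s hs
    obtain ⟨k, rfl⟩ := (List.mem_ofFn' _ _).1 hs
    exact hE k (by omega)

/-- A sequence all of whose prefixes are extended by safe histories is a consistent play
avoiding `E`. -/
theorem play_of_forall_prefix {S : Type*} {turn : S → Bool} {T : S → S → Prop}
    {f2 : List S → S} {s0 : S} {E : Set S} {ρ : ℕ → S}
    (h : ∀ n, ∃ l ∈ safeHist turn T f2 s0 E, histPrefix ρ n <+: l) :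
    IsPlay T s0 ρ ∧ Consistent2 turn f2 ρ ∧ ∀ n, ρ n ∉ E := by
  have key : ∀ n, ∃ t : List S, histPrefix ρ n ++ t ∈ safeHist turn T f2 s0 E := by
    intro n
    obtain ⟨_, hl, t, rfl⟩ := h n
    exact ⟨t, hl⟩
  have hget : ∀ (n : ℕ) (t : List S) (i : ℕ) (hi : i < (histPrefix ρ n ++ t).length),
      i ≤ n → (histPrefix ρ n ++ t)[i] = ρ i := by
    intro n t i hi hin
    rw [List.getElem_append_left (by rw [length_histPrefix]; omega), getElem_histPrefix]
  refine ⟨⟨?_, ?_⟩, ?_, ?_⟩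
  · obtain ⟨t, ⟨-, h0, -, -⟩, -⟩ := key 0
    simpa [histPrefix] using h0
  · intro n
    obtain ⟨t, ⟨-, -, hT, -⟩, -⟩ := key (n + 1)
    have := hT n (by rw [List.length_append, length_histPrefix]; omega)
    simp only [List.get_eq_getElem] at this
    rwa [hget _ _ _ _ (by omega), hget _ _ _ _ le_rfl] at this
  · intro n ht
    obtain ⟨t, ⟨-, -, -, hf⟩, -⟩ := key (n + 1)
    have := hf n (by rw [List.length_append, length_histPrefix]; omega)
    simp only [List.get_eq_getElem] at this
    rw [hget _ _ _ _ (by omega), hget _ _ _ _ le_rfl,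
      List.take_append_of_le_length (by rw [length_histPrefix]; omega),
      take_histPrefix ρ (by omega)] at this
    exact this ht
  · intro n
    obtain ⟨t, -, hE⟩ := key n
    refine hE _ (List.mem_append_left _ ?_)
    exact (List.mem_ofFn' _ _).2 ⟨Fin.last n, by simp⟩

/-- The pigeonhole step of Kőnig's lemma: a list with infinitely many extensions in `G` has
a one-letter extension with infinitely many extensions in `G`. -/
theorem exists_infinite_extension {S : Type*} [Finite S] (G : Set (List S)) (l : List S)
    (h : {l' ∈ G | l <+: l'}.Infinite) : ∃ s, {l' ∈ G | l ++ [s] <+: l'}.Infinite := by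
  by_contra! hcon
  refine h (((Set.finite_singleton l).union
    (Set.finite_iUnion fun s => hcon s)).subset ?_)
  rintro _ ⟨hl', t, rfl⟩
  cases t with
  | nil => simp
  | cons s t => exact Or.inr (Set.mem_iUnion.2 ⟨s, hl', t, by simp⟩)

theorem safeHist_finite {S : Type*} [Finite S] {turn : S → Bool} {T : S → S → Prop}
    {f2 : List S → S} {s0 : S} {E : Set S}
    (hwin : ∀ ρ : ℕ → S, IsPlay T s0 ρ → Consistent2 turn f2 ρ → ∃ n : ℕ, ρ n ∈ E) :
    (safeHist turn T f2 s0 E).Finite := by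
  by_contra hinf
  have : Nonempty S := ⟨s0⟩
  choose! nxt hnxt using exists_infinite_extension (safeHist turn T f2 s0 E)
  let L : ℕ → List S := fun n => Nat.rec [s0] (fun _ l => l ++ [nxt l]) n
  let ρ : ℕ → S := fun n => Nat.casesOn n s0 fun m => nxt (L m)
  have hL : ∀ n, histPrefix ρ n = L n := by
    intro n
    induction n with
    | zero => simp [histPrefix, ρ, L]
    | succ n ih => rw [histPrefix_succ, ih]
  have hbig : ∀ n, {l' ∈ safeHist turn T f2 s0 E | L n <+: l'}.Infinite := by
    intro n
    induction n with
    | zero =>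
      refine Set.Infinite.mono ?_ hinf
      rintro l hl
      refine ⟨hl, ?_⟩
      obtain ⟨t, rfl⟩ := List.head?_eq_some_iff.1 hl.1.2.1
      exact ⟨t, rfl⟩
    | succ n ih => exact hnxt _ ih
  obtain ⟨hp, hc, hE⟩ := play_of_forall_prefix (turn := turn) (T := T) (f2 := f2) (s0 := s0)
    (E := E) (ρ := ρ) fun n => by
      rw [hL]
      exact (hbig n).nonempty
  obtain ⟨n, hn⟩ := hwin ρ hp hc
  exact hE n hn

/-- For a finite-state safety game, a player-2 winning strategy (counterexample) forces the
unsafe set within a uniformly bounded number of steps; equivalently, the tree of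
`f2`-consistent histories containing no unsafe state (the abstract counterexample tree) is
finite. -/
theorem counterexample_tree_finite
    {S : Type*} [Fintype S]
    (turn : S → Bool) (T : S → S → Prop) (hT : ∀ s : S, ∃ s', T s s')
    (E : Set S) (s0 : S)
    (f2 : List S → S) (hf2 : IsStrategy2 turn T f2)
    (hwin : ∀ ρ : ℕ → S, IsPlay T s0 ρ → Consistent2 turn f2 ρ → ∃ n : ℕ, ρ n ∈ E) :
    (∃ N : ℕ, ∀ ρ : ℕ → S, IsPlay T s0 ρ → Consistent2 turn f2 ρ →
      ∃ n : ℕ, n < N ∧ ρ n ∈ E) ∧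
    {l : List S | IsConsistentHist turn T f2 s0 l ∧ ∀ s ∈ l, s ∉ E}.Finite := by
  have hfin : (safeHist turn T f2 s0 E).Finite := safeHist_finite hwin
  refine ⟨?_, hfin⟩
  obtain ⟨N, hN⟩ := (hfin.image List.length).bddAbove
  refine ⟨N + 1, fun ρ hp hc => ?_⟩
  by_contra! hcon
  -- The prefix of index `N` has length `N + 1`, exceeding the bound `N`.
  have := hN ⟨_, histPrefix_mem_safeHist hp hc (n := N) fun k hk => hcon k (by omega), rfl⟩
  rw [length_histPrefix] at this
  omega
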